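/- arXiv:2304.00593 — 3 statements merged into one kernel-verified Lean document; each statement's English description precedes it below -/
import Mathlib

section
/- Let m ≥ 1 and σ > 0. Let Z be an ℝ^m-valued random vector that is σ-subgaussian, let Q : ℝ^m → ℤ^m be elementwise rounding to the nearest integer, and let g : ℤ^m → {1, 2, 3, …} be a bijection such that ‖a‖_∞ > ‖b‖_∞ implies g(a) > g(b). Then for every integer s ≥ 2^m + 1, P[g(Q(Z)) = s] ≤ 2m · exp(−(1/(2σ²)) · ((1/2)(s−1)^{1/m} − 1)²), where (s−1)^{1/m} denotes the real m-th root of s−1. -/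
/-!
Let `a = g⁻¹(s)` and `r = ‖a‖_∞`. Every point which `g` sends to `{1, …, s}` lies in the cube
`[-r, r]^m`, so `s ≤ (2r+1)^m` (`le_pow_zinf`), and hence `u := ½(s-1)^{1/m} - 1 ≤ r - 1/2`.
Some coordinate of `a` has absolute value `r`, so on the event `Q(Z) = a` one of the two signed
coordinates `±Z_j`, with `j` and the sign determined by `a`, is at least `r - 1/2 ≥ u`. The Chernoff
bound for this signed coordinate (`chernoff`; `u ≥ 0` because `s - 1 ≥ 2^m`) gives
`exp(-u²/(2σ²))`, which is stronger than the claim by the factor `2m`.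
-/

open MeasureTheory
open scoped Matrix

/-- The Euclidean (ℓ²) norm of a vector in `ℝ^m`. -/
noncomputable def eucNorm {m : ℕ} (v : Fin m → ℝ) : ℝ :=
  Real.sqrt (∑ i, v i ^ 2)

/-- The ℓ∞ norm `max_j |z j|` (as a natural number) of an integer vector in `ℤ^m`. -/
def zinf {m : ℕ} (z : Fin m → ℤ) : ℕ :=
  Finset.univ.sup fun j => (z j).natAbs

/-- Elementwise rounding to the nearest integer: `[Q x]ᵢ = k` exactly when
`x i ∈ [k - 1/2, k + 1/2)`. -/
noncomputable def roundv {m : ℕ} (x : Fin m → ℝ) : Fin m → ℤ :=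
  fun i => ⌊x i + 1 / 2⌋

/-- A real random variable `X` is `σ`-subgaussian: it is centered and its moment generating
function satisfies `E[exp (l X)] ≤ exp (l² σ² / 2)` for every `l ∈ ℝ`. -/
def RealSubgaussian {Ω : Type*} [MeasurableSpace Ω] (μ : Measure Ω) (σ : ℝ)
    (X : Ω → ℝ) : Prop :=
  Integrable X μ ∧ (∫ ω, X ω ∂μ) = 0 ∧
    ∀ l : ℝ, Integrable (fun ω => Real.exp (l * X ω)) μ ∧
      (∫ ω, Real.exp (l * X ω) ∂μ) ≤ Real.exp (l ^ 2 * σ ^ 2 / 2)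

/-- An `ℝ^m`-valued random vector `X` is `σ`-subgaussian if `cᵀX` is `σ`-subgaussian for
every unit vector `c`. -/
def VecSubgaussian {Ω : Type*} [MeasurableSpace Ω] (μ : Measure Ω) {m : ℕ} (σ : ℝ)
    (X : Ω → Fin m → ℝ) : Prop :=
  ∀ c : Fin m → ℝ, eucNorm c = 1 → RealSubgaussian μ σ (fun ω => c ⬝ᵥ X ω)

/-- The `s` points with `g`-value at most `s` all lie in the cube of radius `‖g⁻¹(s)‖_∞`. -/
lemma le_pow_zinf {m : ℕ} (g : (Fin m → ℤ) ≃ ℕ+)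
    (hg : ∀ a b : Fin m → ℤ, zinf b < zinf a → g b < g a) (s : ℕ+) :
    (s : ℕ) ≤ (2 * zinf (g.symm s) + 1) ^ m := by
  set r := zinf (g.symm s) with hr
  have hcard : (Finset.Icc 1 s).card ≤
      (Fintype.piFinset (fun _ : Fin m => Finset.Icc (-(r : ℤ)) r)).card := by
    refine Finset.card_le_card_of_injOn g.symm ?_ g.symm.injective.injOn
    intro k hk
    have hks : k ≤ s := (Finset.mem_Icc.mp hk).2
    have hz : zinf (g.symm k) ≤ r := by
      by_contra! h
      have := hg _ _ h
      simp only [Equiv.apply_symm_apply] at this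
      exact absurd hks (not_le.mpr this)
    refine Finset.mem_coe.mpr (Fintype.mem_piFinset.mpr fun j => ?_)
    have hj : (g.symm k j).natAbs ≤ zinf (g.symm k) :=
      Finset.le_sup (f := fun j => (g.symm k j).natAbs) (Finset.mem_univ j)
    rw [Finset.mem_Icc]
    omega
  rw [PNat.card_Icc, Fintype.card_piFinset] at hcard
  simp only [Int.card_Icc, Finset.prod_const, Finset.card_univ, Fintype.card_fin,
    PNat.one_coe, Nat.add_sub_cancel] at hcard
  have h2 : ((r : ℤ) + 1 - -(r : ℤ)).toNat = 2 * r + 1 := by omega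
  rwa [h2] at hcard

lemma chernoff {Ω : Type*} [MeasurableSpace Ω] (μ : Measure Ω) [IsProbabilityMeasure μ]
    {σ : ℝ} (hσ : 0 < σ) {X : Ω → ℝ} (hX : RealSubgaussian μ σ X) {u : ℝ} (hu : 0 ≤ u) :
    μ.real {ω | u ≤ X ω} ≤ Real.exp (-(1 / (2 * σ ^ 2)) * u ^ 2) := by
  -- `u / σ ^ 2` is the exponent minimising `l ^ 2 * σ ^ 2 / 2 - l * u`.
  obtain ⟨hint, hle⟩ := hX.2.2 (u / σ ^ 2)
  refine (ProbabilityTheory.measure_ge_le_exp_mul_mgf u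
    (show 0 ≤ u / σ ^ 2 by positivity) hint).trans ?_
  refine (mul_le_mul_of_nonneg_left hle (Real.exp_pos _).le).trans (le_of_eq ?_)
  rw [← Real.exp_add]
  congr 1
  field_simp
  ring

/-- Tail bound on the transformed quantizer output: for a `σ`-subgaussian `Z`, elementwise
rounding `Q` and monotone bijection `g : ℤ^m → ℕ₊`, for every integer `s ≥ 2^m + 1`,
`P[g(Q(Z)) = s] ≤ 2m · exp(-(1/(2σ²))·(½(s-1)^{1/m} - 1)²)`. -/
theorem stmt9 {Ω : Type*} [MeasurableSpace Ω] (μ : Measure Ω) [IsProbabilityMeasure μ]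
    {m : ℕ} (hm : 1 ≤ m) (σ : ℝ) (hσ : 0 < σ) (Z : Ω → Fin m → ℝ)
    (hZ : Measurable Z) (hsub : VecSubgaussian μ σ Z)
    (g : (Fin m → ℤ) ≃ ℕ+) (hg : ∀ a b : Fin m → ℤ, zinf b < zinf a → g b < g a)
    (s : ℕ+) (hs : 2 ^ m + 1 ≤ (s : ℕ)) :
    μ {ω | g (roundv (Z ω)) = s} ≤
      ENNReal.ofReal (2 * m * Real.exp (-(1 / (2 * σ ^ 2)) *
        ((1 / 2) * ((s : ℝ) - 1) ^ ((m : ℝ)⁻¹) - 1) ^ 2)) := by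
  set u : ℝ := (1 / 2) * ((s : ℝ) - 1) ^ ((m : ℝ)⁻¹) - 1 with hu
  set a := g.symm s with ha
  have hm0 : m ≠ 0 := by omega
  have hs' : (2 : ℝ) ^ m + 1 ≤ (s : ℝ) := by exact_mod_cast hs
  have hsr : (s : ℝ) ≤ (2 * (zinf a : ℝ) + 1) ^ m := by exact_mod_cast le_pow_zinf g hg s
  have hu0 : 0 ≤ u := by
    have h : (2 : ℝ) ≤ ((s : ℝ) - 1) ^ ((m : ℝ)⁻¹) := by
      rw [← Real.pow_rpow_inv_natCast (zero_le_two (α := ℝ)) hm0]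
      exact Real.rpow_le_rpow (by positivity) (by linarith) (by positivity)
    rw [hu]
    linarith
  have hur : u ≤ zinf a - 1 / 2 := by
    have h : ((s : ℝ) - 1) ^ ((m : ℝ)⁻¹) ≤ 2 * (zinf a : ℝ) + 1 := by
      rw [← Real.pow_rpow_inv_natCast (show (0 : ℝ) ≤ 2 * (zinf a : ℝ) + 1 by positivity) hm0]
      have h2 : (0 : ℝ) < 2 ^ m := by positivity
      exact Real.rpow_le_rpow (by linarith) (by linarith) (by positivity)
    rw [hu]
    linarith
  obtain ⟨j, -, hj⟩ : ∃ j ∈ Finset.univ, zinf a = (a j).natAbs :=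
    Finset.exists_mem_eq_sup Finset.univ ⟨⟨0, hm⟩, Finset.mem_univ _⟩ fun j => (a j).natAbs
  obtain ⟨e, he, hea⟩ : ∃ e : ℝ, (e = 1 ∨ e = -1) ∧ (zinf a : ℝ) = e * a j := by
    rcases le_total 0 (a j) with h | h
    · refine ⟨1, Or.inl rfl, ?_⟩
      have h1 : (zinf a : ℤ) = a j := by omega
      rw [one_mul]
      exact_mod_cast h1
    · refine ⟨-1, Or.inr rfl, ?_⟩
      have h1 : (zinf a : ℤ) = -a j := by omega
      rw [neg_one_mul]
      exact_mod_cast h1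
  have hX : RealSubgaussian μ σ (fun ω => e * Z ω j) := by
    have hc : eucNorm (Pi.single j e : Fin m → ℝ) = 1 := by
      have hsum : ∑ i, (Pi.single j e : Fin m → ℝ) i ^ 2 = 1 := by
        rw [Finset.sum_eq_single j]
        · rcases he with rfl | rfl <;> simp
        · intro i _ hi
          simp [hi]
        · simp
      rw [eucNorm, hsum, Real.sqrt_one]
    simpa only [single_dotProduct] using hsub _ hc
  have hsubset : {ω | g (roundv (Z ω)) = s} ⊆ {ω | u ≤ e * Z ω j} := by
    intro ω hω
    have hround : ⌊Z ω j + 1 / 2⌋ = a j :=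
      congrFun ((Equiv.eq_symm_apply g).mpr hω : roundv (Z ω) = a) j
    obtain ⟨h1, h2⟩ := Int.floor_eq_iff.mp hround
    simp only [Set.mem_ofPred_eq]
    rcases he with rfl | rfl <;> linarith
  have hm1 : (1 : ℝ) ≤ m := by exact_mod_cast hm
  refine (measure_mono hsubset).trans ?_
  rw [← ofReal_measureReal]
  refine ENNReal.ofReal_le_ofReal ((chernoff μ hσ hX hu0).trans ?_)
  exact le_mul_of_one_le_left (Real.exp_pos _).le (by linarith)
end

section
/- Let ζ > 0 and m ≥ 1, and let p be a probability mass function on the positive integers such that p(z) ≤ 2m · exp(−ζ((z−1)^{1/m} − 2)²) for all integers z ≥ 2^m + 1. Then there exists β > 2²/(∑_{i=1}^∞ i^{−2}) such that p(z) ≤ min(β z^{−2}, 1) for all positive integers z; i.e., p belongs to the power-law envelope class with parameters (2, β). -/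
/-!
It suffices to bound `z² p(z)` uniformly in `z`, since `p ≤ 1` and `β` may be taken as large as
desired. For `z ≤ 2^m` the bound `4^m` is immediate. For `z ≥ 2^m + 1` put `t = (z-1)^{1/m} ≥ 0`,
so that `z - 1 = t^m ≥ 1` and `z² ≤ 4 t^{2m}`; the Gaussian factor `exp(-ζ(t-2)²)` beats the
polynomial `t^{2m}`, as made explicit by `pow_mul_exp_neg_sq_le`.
-/

/-- Since `t² ≤ 2((t-2)² + 4)`, the term of degree `m` in the exponential series of
`ζ((t-2)² + 4)` dominates `t^{2m}`. -/
lemma pow_mul_exp_neg_sq_le (ζ : ℝ) (hζ : 0 < ζ) (m : ℕ) (t : ℝ) :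
    (t ^ m) ^ 2 * Real.exp (-ζ * (t - 2) ^ 2) ≤
      (2 / ζ) ^ m * m.factorial * Real.exp (4 * ζ) := by
  have hbase : (t ^ m) ^ 2 ≤ (2 / ζ) ^ m * (ζ * ((t - 2) ^ 2 + 4)) ^ m := by
    rw [← mul_pow, ← pow_mul, mul_comm m 2, pow_mul]
    refine pow_le_pow_left₀ (sq_nonneg t) ?_ m
    have : 2 / ζ * (ζ * ((t - 2) ^ 2 + 4)) = 2 * ((t - 2) ^ 2 + 4) := by field_simp
    rw [this]
    nlinarith [sq_nonneg (t - 4)]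
  have hexp : (ζ * ((t - 2) ^ 2 + 4)) ^ m ≤
      m.factorial * Real.exp (ζ * ((t - 2) ^ 2 + 4)) := by
    have h := Real.pow_div_factorial_le_exp (ζ * ((t - 2) ^ 2 + 4)) (by positivity) m
    rwa [div_le_iff₀' (by positivity)] at h
  calc (t ^ m) ^ 2 * Real.exp (-ζ * (t - 2) ^ 2)
      ≤ ((2 / ζ) ^ m * (m.factorial * Real.exp (ζ * ((t - 2) ^ 2 + 4)))) *
          Real.exp (-ζ * (t - 2) ^ 2) := by
        gcongr
        exact hbase.trans (by gcongr)
    _ = (2 / ζ) ^ m * m.factorial *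
          (Real.exp (ζ * ((t - 2) ^ 2 + 4)) * Real.exp (-ζ * (t - 2) ^ 2)) := by ring
    _ = (2 / ζ) ^ m * m.factorial * Real.exp (4 * ζ) := by
        rw [← Real.exp_add]
        ring_nf

/-- If a probability mass function `p` on the positive integers satisfies
`p z ≤ 2m·exp(-ζ((z-1)^{1/m} - 2)²)` for all `z ≥ 2^m + 1`, then `p` belongs to the
power-law envelope class with parameters `(2, β)` for some admissible `β`. -/
theorem stmt11 (ζ : ℝ) (hζ : 0 < ζ) (m : ℕ) (hm : 1 ≤ m) (p : ℕ+ → ℝ)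
    (hp0 : ∀ z : ℕ+, 0 ≤ p z) (hp1 : HasSum p 1)
    (henv : ∀ z : ℕ+, 2 ^ m + 1 ≤ (z : ℕ) →
      p z ≤ 2 * m * Real.exp (-ζ * (((z : ℝ) - 1) ^ ((m : ℝ)⁻¹) - 2) ^ 2)) :
    ∃ β : ℝ, (2 : ℝ) ^ 2 / (∑' i : ℕ+, 1 / (i : ℝ) ^ 2) < β ∧
      ∀ z : ℕ+, p z ≤ min (β / (z : ℝ) ^ 2) 1 := by
  have hle1 : ∀ z, p z ≤ 1 := fun z => le_hasSum hp1 z fun j _ => hp0 j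
  set A : ℝ := (2 : ℝ) ^ 2 / (∑' i : ℕ+, 1 / (i : ℝ) ^ 2) with hA
  set C : ℝ := 8 * m * ((2 / ζ) ^ m * m.factorial * Real.exp (4 * ζ)) with hC
  refine ⟨max (A + 1) (max C ((2 ^ m) ^ 2)),
    (lt_add_one A).trans_le (le_max_left _ _), fun z => le_min ?_ (hle1 z)⟩
  have hz1 : (1 : ℝ) ≤ z := by exact_mod_cast z.one_le
  rw [le_div_iff₀ (by positivity)]
  refine le_trans ?_ (le_max_right _ _)
  by_cases hz : 2 ^ m + 1 ≤ (z : ℕ)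
  · refine le_trans ?_ (le_max_left _ _)
    set t : ℝ := ((z : ℝ) - 1) ^ ((m : ℝ)⁻¹) with ht
    have htm : t ^ m = (z : ℝ) - 1 :=
      Real.rpow_inv_natCast_pow (by linarith) (by omega)
    have hz2 : (1 : ℝ) ≤ t ^ m := by
      have h1 : (2 : ℝ) ^ m + 1 ≤ z := by exact_mod_cast hz
      have h2 : (1 : ℝ) ≤ 2 ^ m := one_le_pow₀ (by norm_num)
      linarith
    have hzsq : (z : ℝ) ^ 2 ≤ 4 * (t ^ m) ^ 2 := by nlinarith
    calc p z * (z : ℝ) ^ 2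
        ≤ (2 * m * Real.exp (-ζ * (t - 2) ^ 2)) * (4 * (t ^ m) ^ 2) :=
          mul_le_mul (henv z hz) hzsq (by positivity) (by positivity)
      _ = 8 * m * ((t ^ m) ^ 2 * Real.exp (-ζ * (t - 2) ^ 2)) := by ring
      _ ≤ C := by
          rw [hC]
          exact mul_le_mul_of_nonneg_left (pow_mul_exp_neg_sq_le ζ hζ m t) (by positivity)
  · refine le_trans ?_ (le_max_right _ _)
    have hz' : (z : ℝ) ≤ 2 ^ m := by
      have : (z : ℕ) ≤ 2 ^ m := by omega
      exact_mod_cast this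
    calc p z * (z : ℝ) ^ 2 ≤ 1 * (2 ^ m) ^ 2 := by
          gcongr
          exact hle1 z
      _ = (2 ^ m) ^ 2 := one_mul _
end

section
/- Let ζ > 0 and let p be a probability mass function on the positive integers such that p(z) ≤ 4 · exp(−ζ(√(z−1) − 2)²) for all integers z ≥ 5. Then there exists β > e^{ζ} such that p(z) ≤ min(β e^{−(ζ/2) z}, 1) for all positive integers z; i.e., p belongs to the exponential envelope class with parameters (ζ/2, β). -/
/-!
The inequality `(s - 2)² ≥ s²/2 - 4`, equivalent to `(s - 4)² / 2 ≥ 0`, applied to `s = √(z - 1)`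
bounds the exponent by `-ζ z / 2 + 9 ζ / 2`. Hence `β = 4 exp (9 ζ / 2)` works for `z ≥ 5`; for
`z ≤ 4` the envelope `β exp (-ζ z / 2)` is at least `1`, so `p z ≤ 1` suffices.
-/

/-- If a probability mass function `p` on the positive integers satisfies
`p z ≤ 4·exp(-ζ(√(z-1) - 2)²)` for all `z ≥ 5`, then `p` belongs to the exponential
envelope class with parameters `(ζ/2, β)` for some admissible `β`. -/
theorem stmt13 (ζ : ℝ) (hζ : 0 < ζ) (p : ℕ+ → ℝ)
    (hp0 : ∀ z : ℕ+, 0 ≤ p z) (hp1 : HasSum p 1)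
    (henv : ∀ z : ℕ+, 5 ≤ (z : ℕ) →
      p z ≤ 4 * Real.exp (-ζ * (Real.sqrt ((z : ℝ) - 1) - 2) ^ 2)) :
    ∃ β : ℝ, Real.exp ζ < β ∧
      ∀ z : ℕ+, p z ≤ min (β * Real.exp (-(ζ / 2) * (z : ℝ))) 1 := by
  have hle1 : ∀ z : ℕ+, p z ≤ 1 := fun z => le_hasSum hp1 z fun j _ => hp0 j
  refine ⟨4 * Real.exp (9 / 2 * ζ), ?_, fun z => le_min ?_ (hle1 z)⟩
  · have h : Real.exp ζ < Real.exp (9 / 2 * ζ) := Real.exp_lt_exp.mpr (by linarith)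
    linarith [Real.exp_pos (9 / 2 * ζ)]
  rw [mul_assoc, ← Real.exp_add]
  rcases le_or_gt 5 (z : ℕ) with hz | hz
  · refine (henv z hz).trans ?_
    have hz' : (1 : ℝ) ≤ (z : ℝ) := by exact_mod_cast z.one_le
    have hs := Real.sq_sqrt (sub_nonneg.mpr hz')
    gcongr
    nlinarith [mul_nonneg hζ.le (sq_nonneg (Real.sqrt ((z : ℝ) - 1) - 4))]
  · have hz' : (z : ℝ) ≤ 4 := by exact_mod_cast Nat.le_of_lt_succ hz
    have h : 1 ≤ Real.exp (9 / 2 * ζ + -(ζ / 2) * (z : ℝ)) :=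
      Real.one_le_exp (by nlinarith)
    linarith [hle1 z]
end
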